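/- Let X be a (σ,b)-sub-exponential random variable with mean μ and CDF F, let α ∈ (0,1), and let v_α be the VaR of X at level α. Then for every λ with 0 < λ < 1/b, E[exp(λ·(X − v_α)·𝟙{X ≥ v_α})] ≤ F(v_α) + exp(−λ·v_α + λ·μ + λ²σ²/2) ≤ α + exp(−λ·v_α + λ·μ + λ²σ²/2). -/

import Mathlib

open MeasureTheory ProbabilityTheory Real Set

/-! Pointwise, `exp (t · (x - v) · 𝟙{v ≤ x}) ≤ 𝟙{x < v} + exp (t · (x - v))`, because only one of
the two regimes is active at each `x`. Integrating and bounding the moment generating function gives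
the first inequality. For the second, the CDF stays below `α` strictly to the left of the
Value-at-Risk, hence, by left continuity, at the Value-at-Risk too. -/

lemma exp_mul_ite_sub_le (t v x : ℝ) :
    exp (t * (if v ≤ x then x - v else 0))
      ≤ (Iio v).indicator 1 x + exp (-(t * v)) * exp (t * x) := by
  rcases le_or_gt v x with hvx | hxv
  · have hexp : exp (t * (x - v)) = exp (-(t * v)) * exp (t * x) := by
      rw [← exp_add]; ring_nf
    simp [hvx, hexp]
  · have hpos : 0 < exp (-(t * v)) * exp (t * x) := by positivity
    simp [hxv, hxv.not_ge, hpos.le]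

open scoped Topology in
lemma apply_sInf_setOf_le_le {E G : Type*} [ConditionallyCompleteLinearOrder E]
    [TopologicalSpace E] [LinearOrder G] [TopologicalSpace G] [ClosedIicTopology G]
    {f : E → G} {a : G} (hbdd : BddBelow {x | a ≤ f x})
    [(𝓝[<] sInf {x | a ≤ f x}).NeBot]
    (hf : ContinuousWithinAt f (Iio (sInf {x | a ≤ f x})) (sInf {x | a ≤ f x})) :
    f (sInf {x | a ≤ f x}) ≤ a :=
  le_of_tendsto hf <| eventually_mem_nhdsWithin.mono fun _ hx =>
    (not_le.mp (notMem_of_lt_csInf (s := {x | a ≤ f x}) hx hbdd)).le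

lemma cdf_map_apply {Ω : Type*} [MeasurableSpace Ω] {P : Measure Ω} [IsProbabilityMeasure P]
    {X : Ω → ℝ} (hX : AEMeasurable X P) (x : ℝ) :
    cdf (P.map X) x = P.real {ω | X ω ≤ x} := by
  have := Measure.isProbabilityMeasure_map hX
  rw [cdf_eq_real, map_measureReal_apply_of_aemeasurable hX measurableSet_Iic]
  rfl

lemma bddBelow_setOf_le_cdf (ν : Measure ℝ) {α : ℝ} (hα : 0 < α) :
    BddBelow {ξ | α ≤ cdf ν ξ} := by
  obtain ⟨m, hm⟩ := ((tendsto_cdf_atBot ν).eventually_lt_const hα).exists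
  exact ⟨m, fun _ hξ => ((monotone_cdf ν).reflect_lt (hm.trans_le hξ)).le⟩

/-- The Value-at-Risk at level `α` of a random variable with law `ν` (a probability measure), that
is, the lower `α`-quantile of `ν`. For `α` outside `(0, 1)` it may be the junk value of `sInf`. -/
noncomputable def valueAtRisk (ν : Measure ℝ) (α : ℝ) : ℝ := sInf {ξ | α ≤ cdf ν ξ}

lemma cdf_valueAtRisk_le {ν : Measure ℝ} {α : ℝ} (hα : 0 < α)
    (hcont : ContinuousWithinAt (cdf ν) (Iio (valueAtRisk ν α)) (valueAtRisk ν α)) :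
    cdf ν (valueAtRisk ν α) ≤ α :=
  apply_sInf_setOf_le_le (bddBelow_setOf_le_cdf ν hα) hcont

lemma integral_exp_mul_ite_sub_le {Ω : Type*} [MeasurableSpace Ω] {P : Measure Ω}
    [IsFiniteMeasure P] {X : Ω → ℝ} (hX : AEMeasurable X P) {t : ℝ}
    (hint : Integrable (fun ω => exp (t * X ω)) P) (v : ℝ) :
    ∫ ω, exp (t * (if v ≤ X ω then X ω - v else 0)) ∂P
      ≤ P.real {ω | X ω < v} + exp (-(t * v)) * mgf X P t := by
  have hbelow : NullMeasurableSet {ω | X ω < v} P := nullMeasurableSet_lt hX aemeasurable_const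
  have hind : Integrable ({ω | X ω < v}.indicator (1 : Ω → ℝ)) P :=
    (integrable_const 1).indicator₀ hbelow
  have hexp : Integrable (fun ω => exp (-(t * v)) * exp (t * X ω)) P := hint.const_mul _
  calc ∫ ω, exp (t * (if v ≤ X ω then X ω - v else 0)) ∂P
      ≤ ∫ ω, ({ω | X ω < v}.indicator 1 ω + exp (-(t * v)) * exp (t * X ω)) ∂P :=
        integral_mono_of_nonneg (.of_forall fun _ => (exp_pos _).le) (hind.add hexp)
          (.of_forall fun ω => exp_mul_ite_sub_le t v (X ω))
    _ = P.real {ω | X ω < v} + exp (-(t * v)) * mgf X P t := by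
        rw [integral_add hind hexp, integral_const_mul, integral_indicator₀ hbelow, mgf]
        simp

theorem mgf_truncated_excess_subExponential_general {Ω : Type*} [MeasurableSpace Ω]
    {P : Measure Ω} [IsProbabilityMeasure P] {X : Ω → ℝ} (hX : AEMeasurable X P)
    {t c : ℝ} (hint : Integrable (fun ω => exp (t * X ω)) P) (hmgf : mgf X P t ≤ exp c)
    {α : ℝ} (hα : α ∈ Ioo (0 : ℝ) 1) {v : ℝ} (hv : v = valueAtRisk (P.map X) α)
    (hcont : ContinuousAt (cdf (P.map X)) v) :
    (∫ ω, exp (t * (if v ≤ X ω then X ω - v else 0)) ∂P)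
        ≤ cdf (P.map X) v + exp (-(t * v) + c) ∧
    cdf (P.map X) v + exp (-(t * v) + c) ≤ α + exp (-(t * v) + c) := by
  constructor
  · calc ∫ ω, exp (t * (if v ≤ X ω then X ω - v else 0)) ∂P
        ≤ P.real {ω | X ω < v} + exp (-(t * v)) * mgf X P t :=
          integral_exp_mul_ite_sub_le hX hint v
      _ ≤ P.real {ω | X ω ≤ v} + exp (-(t * v)) * exp c := by
          have hmono : P.real {ω | X ω < v} ≤ P.real {ω | X ω ≤ v} :=
            measureReal_mono fun ω (hω : X ω < v) => hω.le
          gcongr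
      _ = cdf (P.map X) v + exp (-(t * v) + c) := by rw [cdf_map_apply hX, exp_add]
  · subst hv
    gcongr
    exact cdf_valueAtRisk_le hα.1 hcont.continuousWithinAt

/-- **MGF bound for the truncated excess of a sub-exponential random variable.**
For `(σ,b)`-sub-exponential `X` with mean `μ`, CDF `F` and VaR `v_α` at level `α`,
for every `0 < λ < 1/b`:
`E[exp(λ (X − v_α) 𝟙{X ≥ v_α})] ≤ F(v_α) + exp(−λ v_α + λ μ + λ²σ²/2)
  ≤ α + exp(−λ v_α + λ μ + λ²σ²/2)`. -/
theorem mgf_truncated_excess_subExponential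
    {Ω : Type*} [MeasurableSpace Ω] (P : Measure Ω) [IsProbabilityMeasure P]
    (X : Ω → ℝ) (hXmeas : Measurable X) (hXint : Integrable X P)
    (μX : ℝ) (hmean : μX = ∫ ω, X ω ∂P)
    (σ : ℝ) (hσ : 0 < σ) (b : ℝ) (hb : 0 < b)
    (hmgf : ∀ l : ℝ, |l| < 1/b → Integrable (fun ω => exp (l * X ω)) P)
    (hsube : ∀ l : ℝ, |l| < 1/b →
      ∫ ω, exp (l * X ω) ∂P ≤ exp (l * μX + l^2 * σ^2 / 2))
    (F : ℝ → ℝ) (hF : ∀ t, F t = (P {ω | X ω ≤ t}).toReal)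
    (hFcont : Continuous F)
    (α : ℝ) (hα : α ∈ Ioo (0:ℝ) 1)
    (v : ℝ) (hv : v = sInf {ξ : ℝ | α ≤ F ξ})
    (l : ℝ) (hl : 0 < l) (hlb : l < 1/b) :
    (∫ ω, exp (l * (if v ≤ X ω then X ω - v else 0)) ∂P)
        ≤ F v + exp (-(l * v) + l * μX + l^2 * σ^2 / 2) ∧
    F v + exp (-(l * v) + l * μX + l^2 * σ^2 / 2)
        ≤ α + exp (-(l * v) + l * μX + l^2 * σ^2 / 2) := by
  obtain rfl : F = cdf (P.map X) :=
    funext fun t => (hF t).trans (cdf_map_apply hXmeas.aemeasurable t).symm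
  have hlabs : |l| < 1/b := by rwa [abs_of_pos hl]
  simpa only [add_assoc] using mgf_truncated_excess_subExponential_general hXmeas.aemeasurable
    (hmgf l hlabs) (hsube l hlabs) hα hv hFcont.continuousAt
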